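/- An invertible RDS φ on 𝕊¹ is stably synchronising if and only if ℙ(Ω_c)=1 and for every x∈𝕊¹, ℙ(ω∈Ω_c : r̃(ω)=x)=0, where Ω_c is the set of contractive sample points and r̃ the crack-point map. -/

import Mathlib

open MeasureTheory Filter Topology Set ENNReal

noncomputable section

/-- The natural projection `π : ℝ → 𝕊¹ = ℝ/ℤ`. -/
def circleProj (x : ℝ) : UnitAddCircle := (x : UnitAddCircle)

/-- `f` is an orientation-preserving homeomorphism of the circle: it admits a strictly
monotone degree-one lift. -/
def OrientPreserving (f : UnitAddCircle ≃ₜ UnitAddCircle) : Prop :=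
  ∃ F : ℝ → ℝ, StrictMono F ∧ (∀ x : ℝ, F (x + 1) = F x + 1) ∧
    ∀ x : ℝ, f (circleProj x) = circleProj (F x)

/-- The anticlockwise distance `d₊(x,y) = min {r ≥ 0 : π(x' + r) = y}` (`x'` any lift of `x`). -/
def dPlus (x y : UnitAddCircle) : ℝ :=
  sInf {r : ℝ | 0 ≤ r ∧ ∃ x' : ℝ, circleProj x' = x ∧ circleProj (x' + r) = y}

/-- An invertible random dynamical system on the circle, in discrete or continuous time,
driven by a stationary memoryless noise process. -/
structure RDS (Ω : Type) [m : MeasurableSpace Ω] where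
  /-- the time set `𝕋⁺`: either `ℕ ∪ {0}` or `[0,∞)`, viewed inside `ℝ` -/
  T : Set ℝ
  T_cases : T = Set.range (fun n : ℕ => (n : ℝ)) ∨ T = Set.Ici (0 : ℝ)
  /-- the filtration -/
  F : ℝ → MeasurableSpace Ω
  F_le : ∀ t ∈ T, F t ≤ m
  F_mono : ∀ s ∈ T, ∀ t ∈ T, s ≤ t → F s ≤ F t
  /-- the probability measure -/
  P : Measure Ω
  P_prob : IsProbabilityMeasure P
  /-- the time-shift maps on the noise space -/
  θ : ℝ → Ω → Ω
  θ_zero : θ 0 = id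
  θ_add : ∀ s ∈ T, ∀ t ∈ T, θ (s + t) = θ t ∘ θ s
  θ_preserving : ∀ t ∈ T, MeasurePreserving (θ t) P P
  θ_adapted : ∀ s ∈ T, ∀ t ∈ T, @Measurable Ω Ω (F (s + t)) (F s) (θ t)
  θ_indep : ∀ t ∈ T, ∀ E A : Set Ω, MeasurableSet[F t] E →
    MeasurableSet[⨆ s ∈ T, F s] A → P (E ∩ θ t ⁻¹' A) = P E * P A
  /-- the random homeomorphisms -/
  φ : ℝ → Ω → UnitAddCircle ≃ₜ UnitAddCircle
  φ_orient : ∀ t ∈ T, ∀ ω, OrientPreserving (φ t ω)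
  φ_meas : ∀ t ∈ T, @Measurable (Ω × UnitAddCircle) UnitAddCircle
    ((F t).prod inferInstance) inferInstance (fun p => φ t p.1 p.2)
  φ_zero : ∀ ω, φ 0 ω = Homeomorph.refl UnitAddCircle
  φ_cocycle : ∀ s ∈ T, ∀ t ∈ T, ∀ ω x, φ (s + t) ω x = φ t (θ s ω) (φ s ω x)
  φ_cadlag_right : ∀ ω, ∀ t ∈ T, ∀ tn : ℕ → ℝ, (∀ n, tn n ∈ T) → Antitone tn →
    Tendsto tn atTop (𝓝 t) → ∀ (xn : ℕ → UnitAddCircle) (x : UnitAddCircle),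
      Tendsto xn atTop (𝓝 x) →
      Tendsto (fun n => φ (tn n) ω (xn n)) atTop (𝓝 (φ t ω x))
  /-- the left-limit maps -/
  φ_left_lim : ℝ → Ω → UnitAddCircle → UnitAddCircle
  φ_cadlag_left : ∀ ω, ∀ t ∈ T, ∀ tn : ℕ → ℝ, (∀ n, tn n ∈ T) → StrictMono tn →
    Tendsto tn atTop (𝓝 t) → ∀ (xn : ℕ → UnitAddCircle) (x : UnitAddCircle),
      Tendsto xn atTop (𝓝 x) →
      Tendsto (fun n => φ (tn n) ω (xn n)) atTop (𝓝 (φ_left_lim t ω x))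

/-- A probability measure on the circle is atomless if every singleton is null. -/
def Atomless (ρ : Measure UnitAddCircle) : Prop := ∀ x, ρ {x} = 0

/-- A measure on the circle has full support. -/
def FullSupport (ρ : Measure UnitAddCircle) : Prop :=
  ∀ U : Set UnitAddCircle, IsOpen U → U.Nonempty → 0 < ρ U

/-- The (topological) support of a measure on the circle. -/
def msupport (ρ : Measure UnitAddCircle) : Set UnitAddCircle :=
  {x | ∀ U : Set UnitAddCircle, IsOpen U → x ∈ U → 0 < ρ U}

namespace RDS

variable {Ω : Type} [m : MeasurableSpace Ω] (S : RDS Ω)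

/-- the future σ-algebra `𝓕₊ = σ(𝓕_t : t ∈ 𝕋⁺)`. -/
def Fplus : MeasurableSpace Ω := ⨆ t ∈ S.T, S.F t

/-- The filter "t → ∞ along the time set 𝕋⁺". -/
def tFilter : Filter ℝ := atTop ⊓ 𝓟 S.T

/-- two-point contractibility. -/
def Contractible : Prop := ∀ x y : UnitAddCircle, x ≠ y →
  0 < S.P {ω | ∃ t ∈ S.T, dist (S.φ t ω x) (S.φ t ω y) < dist x y}

/-- compressibility. -/
def Compressible : Prop := ∀ x y : UnitAddCircle, x ≠ y →
  0 < S.P {ω | ∃ t ∈ S.T, dPlus (S.φ t ω x) (S.φ t ω y) < dPlus x y}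

/-- `p` is a deterministic fixed point. -/
def DetFixedPoint (p : UnitAddCircle) : Prop :=
  ∀ᵐ ω ∂S.P, ∀ t ∈ S.T, S.φ t ω p = p

/-- `A` is forward-invariant. -/
def ForwardInvariant (A : Set UnitAddCircle) : Prop :=
  ∀ᵐ ω ∂S.P, ∀ t ∈ S.T, ⇑(S.φ t ω) '' A ⊆ A

/-- reverse-minimal dynamics: the only open forward-invariant sets are `∅` and `𝕊¹`. -/
def ReverseMinimal : Prop :=
  ∀ A : Set UnitAddCircle, IsOpen A → S.ForwardInvariant A → A = ∅ ∨ A = Set.univ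

/-- synchronisation. -/
def Synchronising : Prop := ∀ x y : UnitAddCircle,
  S.P {ω | Tendsto (fun t => dist (S.φ t ω x) (S.φ t ω y)) S.tFilter (𝓝 0)} = 1

/-- everywhere local stability. -/
def EverywhereLocallyStable : Prop := ∀ x : UnitAddCircle,
  S.P {ω | ∃ U : Set UnitAddCircle, IsOpen U ∧ x ∈ U ∧
    Tendsto (fun t => volume (⇑(S.φ t ω) '' U)) S.tFilter (𝓝 0)} = 1

/-- stable synchronisation. -/
def StablySynchronising : Prop := S.Synchronising ∧ S.EverywhereLocallyStable

/-- `ρ` is reverse-stationary: `ρ(A) = ∫ ρ(φ(t,ω)A) ℙ(dω)` for all `t ∈ 𝕋⁺`, Borel `A`. -/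
def ReverseStationary (ρ : Measure UnitAddCircle) : Prop :=
  ∀ t ∈ S.T, ∀ A : Set UnitAddCircle, MeasurableSet A →
    ρ A = ∫⁻ ω, ρ (⇑(S.φ t ω) '' A) ∂S.P

/-- `r` is a crack point of `ω`. -/
def CrackPoint (ω : Ω) (r : UnitAddCircle) : Prop :=
  ∀ G : Set UnitAddCircle, IsClosed G → r ∉ G →
    Tendsto (fun t => volume (⇑(S.φ t ω) '' G)) S.tFilter (𝓝 0)

/-- the set of contractive sample points. -/
def Ωc : Set Ω := {ω | ∃ r, S.CrackPoint ω r}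

/-- the reverse transition probabilities `φ̄ₓᵗ(A) = ℙ(ω : φ(t,ω)⁻¹(x) ∈ A)`. -/
def revTrans (t : ℝ) (x : UnitAddCircle) (A : Set UnitAddCircle) : ℝ≥0∞ :=
  S.P {ω | (S.φ t ω).symm x ∈ A}

/-- the forward transition probabilities `φₓᵗ(A) = ℙ(ω : φ(t,ω)x ∈ A)`. -/
def fwdTrans (t : ℝ) (x : UnitAddCircle) (A : Set UnitAddCircle) : ℝ≥0∞ :=
  S.P {ω | S.φ t ω x ∈ A}

/-- `ρ` is stationary for a transition family `ν`. -/
def StationaryFor (ν : ℝ → UnitAddCircle → Set UnitAddCircle → ℝ≥0∞)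
    (ρ : Measure UnitAddCircle) : Prop :=
  ∀ t ∈ S.T, ∀ A : Set UnitAddCircle, MeasurableSet A → ρ A = ∫⁻ x, ν t x A ∂ρ

/-- `ρ` is ergodic for a transition family `ν`. -/
def ErgodicFor (ν : ℝ → UnitAddCircle → Set UnitAddCircle → ℝ≥0∞)
    (ρ : Measure UnitAddCircle) : Prop :=
  S.StationaryFor ν ρ ∧ ∀ A : Set UnitAddCircle, MeasurableSet A →
    (∀ t ∈ S.T, ∀ᵐ x ∂ρ, x ∈ A → ν t x A = 1) → ρ A = 0 ∨ ρ A = 1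

end RDS

/-!
An arc whose image enters infinitely often a set that the flow contracts with positive probability
must itself be contracted almost surely: after each visit the future noise is independent of the
past, so the conditional probability of contraction stays bounded below along the visits, while by
Lévy's zero-one law it converges to the indicator of contraction. Compactness of the circle
replaces the contractible neighbourhoods given by local stability by all balls of one radius `δ`.
Under synchronisation the endpoints of an arc come together, so at every late time the image of the
arc or that of the complementary arc lies in such a ball; hence almost surely one of the two is
contracted, simultaneously for all arcs with rational endpoints. Compactness also yields a point
none of whose neighbourhoods is contracted, and the dichotomy on small rational arcs around it says
that it is a crack point. It differs from a given `x` almost surely because `x` has a contracted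
neighbourhood. The converse is deterministic away from the null events that the crack point is `x`
or `y`: any closed arc containing `x` and `y` but not the crack point is contracted.
-/

lemma exists_finset_forall_exists_ball_subset {X : Type*} [PseudoMetricSpace X] [CompactSpace X]
    {U : X → Set X} (hU : ∀ x, U x ∈ 𝓝 x) :
    ∃ s : Finset X, ∃ δ > 0, ∀ z, ∃ x ∈ s, Metric.ball z δ ⊆ U x := by
  obtain ⟨s, hs⟩ := CompactSpace.elim_nhds_subcover (fun x => interior (U x))
    fun x => interior_mem_nhds.2 (hU x)
  obtain ⟨δ, hδ, hball⟩ := lebesgue_number_lemma_of_metric isCompact_univ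
    (c := fun x : s => interior (U x)) (fun _ => isOpen_interior)
    ((iUnion_subtype (· ∈ s) fun x => interior (U x)).trans hs).ge
  exact ⟨s, δ, hδ, fun z => (hball z (mem_univ z)).elim fun x hx =>
    ⟨x, x.2, hx.trans interior_subset⟩⟩

/-! ### Diameters of images -/

section Diameter

variable {X Y : Type*} [PseudoEMetricSpace Y]

lemma ediam_image_eq_of_subset_closure [TopologicalSpace X] {f : X → Y} (hf : Continuous f)
    {D K : Set X} (hDK : D ⊆ K) (hKD : K ⊆ closure D) :
    Metric.ediam (f '' K) = Metric.ediam (f '' D) := by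
  refine le_antisymm ?_ (Metric.ediam_mono (image_mono hDK))
  calc Metric.ediam (f '' K) ≤ Metric.ediam (closure (f '' D)) :=
        Metric.ediam_mono ((image_mono hKD).trans (image_closure_subset_closure_image hf))
    _ = Metric.ediam (f '' D) := Metric.ediam_closure _

lemma ediam_image_le_of_tendsto {ι : Type*} {l : Filter ι} [l.NeBot] {f : ι → X → Y} {g : X → Y}
    {K : Set X} {C : ℝ≥0∞} (hfg : ∀ x ∈ K, Tendsto (fun i => f i x) l (𝓝 (g x)))
    (hC : ∀ i, Metric.ediam (f i '' K) ≤ C) : Metric.ediam (g '' K) ≤ C := by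
  simp only [Metric.ediam_image_le_iff] at hC ⊢
  exact fun x hx y hy =>
    le_of_tendsto' ((hfg x hx).edist (hfg y hy)) fun i => hC i x hx y hy

end Diameter

section RandomMap

variable {α X Y : Type*} {mα : MeasurableSpace α} [PseudoMetricSpace X] [SecondCountableTopology X]
  {f : α → X → Y}

lemma measurable_ediam_image [PseudoEMetricSpace Y] [SecondCountableTopology Y]
    [MeasurableSpace Y] [OpensMeasurableSpace Y] (hcont : ∀ a, Continuous (f a))
    (hmeas : ∀ x, Measurable fun a => f a x) (K : Set X) :
    Measurable fun a => Metric.ediam (f a '' K) := by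
  obtain ⟨D, hDK, hD, hKD⟩ :=
    (TopologicalSpace.IsSeparable.of_separableSpace K).exists_countable_dense_subset
  have ediam_eq : (fun a => Metric.ediam (f a '' K)) =
      fun a => ⨆ x ∈ D, ⨆ y ∈ D, edist (f a x) (f a y) := by
    funext a
    rw [ediam_image_eq_of_subset_closure (hcont a) hDK hKD]
    simp only [Metric.ediam, iSup_image]
  rw [ediam_eq]
  exact .biSup D hD fun x _ => .biSup D hD fun y _ => (hmeas x).edist (hmeas y)

lemma measurableSet_image_subset [TopologicalSpace Y] [MeasurableSpace Y]
    [OpensMeasurableSpace Y] (hcont : ∀ a, Continuous (f a))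
    (hmeas : ∀ x, Measurable fun a => f a x) (K : Set X) {J : Set Y} (hJ : IsClosed J) :
    MeasurableSet {a | f a '' K ⊆ J} := by
  obtain ⟨D, hDK, hD, hKD⟩ :=
    (TopologicalSpace.IsSeparable.of_separableSpace K).exists_countable_dense_subset
  have image_subset_iff_dense (a : α) : f a '' K ⊆ J ↔ ∀ x ∈ D, f a x ∈ J := by
    rw [image_subset_iff]
    exact ⟨fun h x hx => h (hDK hx),
      fun h => hKD.trans ((hJ.preimage (hcont a)).closure_subset_iff.2 h)⟩
  simp only [image_subset_iff_dense, ofPred_forall]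
  exact .biInter hD fun x _ => hmeas x hJ.measurableSet

end RandomMap

/-! ### Lévy's zero-one law -/

section ZeroOne

variable {Ω : Type*} {m : MeasurableSpace Ω} {μ : Measure Ω}

lemma ae_mem_of_frequently_le_condExp [IsFiniteMeasure μ] (ℱ : Filtration ℕ m) {A : Set Ω}
    (hA : MeasurableSet[⨆ n, ℱ n] A) {c : ℝ} (hc : 0 < c) :
    ∀ᵐ ω ∂μ, (∃ᶠ n in atTop, c ≤ μ[A.indicator (fun _ => (1 : ℝ)) | ℱ n] ω) → ω ∈ A := by
  have hℱ : ⨆ n, ℱ n ≤ m := iSup_le ℱ.le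
  have levy := tendsto_ae_condExp (μ := μ) (ℱ := ℱ) (A.indicator fun _ => (1 : ℝ))
  rw [condExp_of_stronglyMeasurable hℱ (stronglyMeasurable_const.indicator hA)
    ((integrable_const 1).indicator (hℱ A hA))] at levy
  filter_upwards [levy] with ω hω hfreq
  by_contra hωA
  rw [indicator_of_notMem hωA] at hω
  obtain ⟨n, hle, hlt⟩ := (hfreq.and_eventually (hω.eventually_lt_const hc)).exists
  exact hle.not_gt hlt

lemma ae_measureReal_le_condExp_of_indep [IsFiniteMeasure μ] {m₁ m₂ : MeasurableSpace Ω}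
    (hm₁ : m₁ ≤ m) (hm₂ : m₂ ≤ m) (hindep : ProbabilityTheory.Indep m₁ m₂ μ) {A C E : Set Ω}
    (hA : MeasurableSet[m] A) (hC : MeasurableSet[m₁] C) (hE : MeasurableSet[m₂] E)
    (hsub : E ∩ C ⊆ A) :
    ∀ᵐ ω ∂μ, ω ∈ E → μ.real C ≤ μ[A.indicator (fun _ => (1 : ℝ)) | m₂] ω := by
  have hCint : Integrable (C.indicator fun _ => (1 : ℝ)) μ :=
    (integrable_const 1).indicator (hm₁ C hC)
  have condExp_C : μ[C.indicator (fun _ => (1 : ℝ)) | m₂] =ᵐ[μ] fun _ => μ.real C := by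
    simpa only [integral_indicator_const _ (hm₁ C hC), smul_eq_mul, mul_one] using
      condExp_indep_eq (f := C.indicator fun _ => (1 : ℝ)) hm₁ hm₂
        (stronglyMeasurable_const.indicator hC) hindep
  have condExp_mono_inter :
      μ[E.indicator (C.indicator fun _ => (1 : ℝ)) | m₂] ≤ᵐ[μ]
        μ[A.indicator (fun _ => (1 : ℝ)) | m₂] := by
    have indicator_le : E.indicator (C.indicator fun _ => (1 : ℝ)) ≤ A.indicator fun _ => 1 := by
      rw [indicator_indicator]
      exact indicator_le_indicator_of_subset hsub fun _ => zero_le_one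
    exact condExp_mono (hCint.indicator (hm₂ E hE)) ((integrable_const 1).indicator hA)
      (.of_forall indicator_le)
  filter_upwards [condExp_C, condExp_indicator hCint hE, condExp_mono_inter]
    with ω hconst hind hmono hωE
  rwa [hind, indicator_of_mem hωE, hconst] at hmono

lemma prob_eq_one_of_diff_null_subset [IsProbabilityMeasure μ] {A B N : Set Ω} (hA : μ A = 1)
    (hN : μ N = 0) (hsub : A \ N ⊆ B) : μ B = 1 := by
  refine prob_le_one.antisymm ?_
  calc 1 = μ (A \ N) := by rw [measure_sdiff_null hN, hA]
    _ ≤ μ B := measure_mono hsub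

end ZeroOne

/-! ### Arcs of the circle -/

/-- The closed arc run through anticlockwise from `circleProj a` to `circleProj b`. It is encoded
by lifts of its endpoints: it is empty when `b < a` and the whole circle when `a + 1 ≤ b`. -/
def circleArc (a b : ℝ) : Set UnitAddCircle := circleProj '' Icc a b

lemma circleProj_surjective : Function.Surjective circleProj :=
  QuotientAddGroup.mk_surjective

lemma continuous_circleProj : Continuous circleProj :=
  AddCircle.continuous_mk' 1

lemma circleProj_add_one (u : ℝ) : circleProj (u + 1) = circleProj u :=
  AddCircle.coe_add_period 1 u

lemma circleProj_sub_intCast (u : ℝ) (n : ℤ) : circleProj (u - n) = circleProj u := by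
  rw [circleProj, circleProj, AddCircle.coe_sub, sub_eq_self]
  exact (AddCircle.coe_eq_zero_iff 1).2 ⟨n, by simp⟩

lemma dist_circleProj (u v : ℝ) :
    dist (circleProj u) (circleProj v) = |u - v - round (u - v)| := by
  rw [dist_eq_norm, circleProj, circleProj, ← AddCircle.coe_sub, UnitAddCircle.norm_eq]

lemma dist_circleProj_le (u v : ℝ) : dist (circleProj u) (circleProj v) ≤ |u - v| := by
  simpa only [dist_circleProj, Int.cast_zero, sub_zero] using round_le (u - v) 0

lemma sub_lt_or_sub_lt_of_dist_circleProj_lt {u v δ : ℝ}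
    (h : dist (circleProj u) (circleProj v) < δ) : v - u < δ ∨ u + 1 - v < δ := by
  have δ_pos : 0 < δ := dist_nonneg.trans_lt h
  rcases lt_or_ge v u with hvu | huv
  · exact .inl (by linarith)
  rcases le_or_gt (u + 1) v with huv' | hvu
  · exact .inr (by linarith)
  have fract_eq : Int.fract (v - u) = v - u :=
    Int.fract_eq_self.2 ⟨by linarith, by linarith⟩
  rw [dist_comm, dist_circleProj, abs_sub_round_eq_min, fract_eq, min_lt_iff] at h
  exact h.imp_right fun h => by linarith

lemma closedBall_circleProj (c ρ : ℝ) :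
    Metric.closedBall (circleProj c) ρ = circleArc (c - ρ) (c + ρ) := by
  ext z
  constructor
  · obtain ⟨w, rfl⟩ := circleProj_surjective z
    intro hw
    rw [Metric.mem_closedBall, dist_circleProj, abs_le] at hw
    exact ⟨w - round (w - c), ⟨by linarith, by linarith⟩, circleProj_sub_intCast w _⟩
  · rintro ⟨w, hw, rfl⟩
    refine (dist_circleProj_le w c).trans (abs_le.2 ⟨?_, ?_⟩) <;> linarith [hw.1, hw.2]

lemma isClosed_circleArc (a b : ℝ) : IsClosed (circleArc a b) :=
  (isCompact_Icc.image continuous_circleProj).isClosed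

lemma circleArc_mem_nhds {a b c : ℝ} (ha : a < c) (hb : c < b) :
    circleArc a b ∈ 𝓝 (circleProj c) :=
  QuotientAddGroup.isOpenMap_coe.image_mem_nhds (Icc_mem_nhds ha hb)

lemma circleArc_union_circleArc (a b : ℝ) : circleArc a b ∪ circleArc b (a + 1) = univ := by
  rw [circleArc, circleArc, ← image_union, eq_univ_iff_forall]
  refine fun z => image_mono Icc_subset_Icc_union_Icc ?_
  exact (AddCircle.coe_image_Icc_eq (1 : ℝ) a).ge (mem_univ z)

lemma volume_circleArc (a b : ℝ) : volume (circleArc a b) = ENNReal.ofReal (min 1 (b - a)) := by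
  have arc_eq_closedBall :
      circleArc a b = Metric.closedBall (circleProj ((a + b) / 2)) ((b - a) / 2) := by
    rw [closedBall_circleProj]
    ring_nf
  rw [arc_eq_closedBall, AddCircle.volume_closedBall, mul_div_cancel₀ _ two_ne_zero]

lemma circleProj_notMem_circleArc {a b c : ℝ} (ha : c < a) (hb : b < c + 1) :
    circleProj c ∉ circleArc a b := by
  rintro ⟨u, hu, huc⟩
  have u_eq : u = c := (AddCircle.coe_eq_coe_iff_of_mem_Ico (p := 1) (a := c)
    ⟨(ha.trans_le hu.1).le, hu.2.trans_lt hb⟩ ⟨le_rfl, lt_add_one c⟩).1 huc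
  linarith [hu.1]

lemma dist_le_of_mem_circleArc {a b : ℝ} {x y : UnitAddCircle} (hx : x ∈ circleArc a b)
    (hy : y ∈ circleArc a b) : dist x y ≤ b - a := by
  obtain ⟨u, hu, rfl⟩ := hx
  obtain ⟨v, hv, rfl⟩ := hy
  refine (dist_circleProj_le u v).trans (abs_le.2 ⟨?_, ?_⟩) <;> linarith [hu.1, hu.2, hv.1, hv.2]

lemma ediam_circleArc_le_volume (a b : ℝ) :
    Metric.ediam (circleArc a b) ≤ volume (circleArc a b) := by
  refine Metric.ediam_le fun x hx y hy => ?_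
  rw [edist_dist, volume_circleArc]
  refine ENNReal.ofReal_le_ofReal (le_min ?_ (dist_le_of_mem_circleArc hx hy))
  rw [dist_eq_norm]
  exact (AddCircle.norm_le_half_period 1 one_ne_zero).trans (by norm_num)

lemma volume_le_two_mul_ediam (K : Set UnitAddCircle) : volume K ≤ 2 * Metric.ediam K := by
  rcases K.eq_empty_or_nonempty with rfl | ⟨x, hx⟩
  · simp
  have ediam_ne_top : Metric.ediam K ≠ ∞ := (Metric.isBounded_of_compactSpace).ediam_ne_top
  have subset_closedBall : K ⊆ Metric.closedBall x (Metric.diam K) := fun y hy =>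
    Metric.dist_le_diam_of_mem' ediam_ne_top hy hx
  calc volume K ≤ volume (Metric.closedBall x (Metric.diam K)) := measure_mono subset_closedBall
    _ ≤ ENNReal.ofReal (2 * Metric.diam K) := by
      rw [AddCircle.volume_closedBall]
      exact ENNReal.ofReal_le_ofReal (min_le_right _ _)
    _ = 2 * Metric.ediam K := by
      rw [ENNReal.ofReal_mul zero_le_two, ENNReal.ofReal_ofNat, Metric.diam,
        ENNReal.ofReal_toReal ediam_ne_top]

lemma exists_circleArc_mem_mem_notMem {x y r : UnitAddCircle} (hx : x ≠ r) (hy : y ≠ r) :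
    ∃ a b : ℝ, x ∈ circleArc a b ∧ y ∈ circleArc a b ∧ r ∉ circleArc a b := by
  obtain ⟨c, rfl⟩ := circleProj_surjective r
  have exists_lift_mem_Ioo {z : UnitAddCircle} (hz : z ≠ circleProj c) :
      ∃ u ∈ Ioo c (c + 1), circleProj u = z := by
    obtain ⟨u, hu, rfl⟩ := (AddCircle.coe_image_Ico_eq (1 : ℝ) c).ge (mem_univ z)
    exact ⟨u, ⟨hu.1.lt_of_ne (by rintro rfl; exact hz rfl), hu.2⟩, rfl⟩
  obtain ⟨u, hu, rfl⟩ := exists_lift_mem_Ioo hx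
  obtain ⟨v, hv, rfl⟩ := exists_lift_mem_Ioo hy
  exact ⟨min u v, max u v, mem_image_of_mem _ ⟨min_le_left _ _, le_max_left _ _⟩,
    mem_image_of_mem _ ⟨min_le_right _ _, le_max_right _ _⟩,
    circleProj_notMem_circleArc (lt_min hu.1 hv.1) (max_lt hu.2 hv.2)⟩

namespace OrientPreserving

variable {f : UnitAddCircle ≃ₜ UnitAddCircle}

lemma exists_orderIso_lift (hf : OrientPreserving f) :
    ∃ F : ℝ ≃o ℝ, (∀ x, F (x + 1) = F x + 1) ∧ ∀ x, f (circleProj x) = circleProj (F x) := by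
  obtain ⟨F, hF, F_add_one, f_proj⟩ := hf
  let G : CircleDeg1Lift := ⟨⟨F, hF.monotone⟩, F_add_one⟩
  have F_surjective : Function.Surjective F := by
    intro y
    obtain ⟨z, hz⟩ := f.surjective (circleProj y)
    obtain ⟨x, rfl⟩ := circleProj_surjective z
    rw [f_proj, eq_comm, ← sub_eq_zero, circleProj, circleProj, ← AddCircle.coe_sub] at hz
    obtain ⟨n, hn⟩ := (AddCircle.coe_eq_zero_iff 1).1 hz
    rw [zsmul_one, eq_sub_iff_add_eq'] at hn
    exact ⟨x + n, (G.map_add_int x n).trans hn⟩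
  exact ⟨hF.orderIsoOfSurjective F F_surjective, F_add_one, f_proj⟩

lemma exists_image_circleArc_eq (hf : OrientPreserving f) (a b : ℝ) : ∃ u v : ℝ,
    f (circleProj a) = circleProj u ∧ f (circleProj b) = circleProj v ∧
      f '' circleArc a b = circleArc u v ∧ f '' circleArc b (a + 1) = circleArc v (u + 1) := by
  obtain ⟨F, F_add_one, f_proj⟩ := hf.exists_orderIso_lift
  have image_circleArc (c d : ℝ) : f '' circleArc c d = circleArc (F c) (F d) := by
    simp only [circleArc, ← F.image_Icc, image_image, f_proj]
  exact ⟨F a, F b, f_proj a, f_proj b, image_circleArc a b, by rw [image_circleArc, F_add_one]⟩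

lemma ediam_image_circleArc_le_volume (hf : OrientPreserving f) (a b : ℝ) :
    Metric.ediam (f '' circleArc a b) ≤ volume (f '' circleArc a b) := by
  obtain ⟨u, v, -, -, image_eq, -⟩ := hf.exists_image_circleArc_eq a b
  rw [image_eq]
  exact ediam_circleArc_le_volume u v

lemma image_circleArc_subset_ball_or (hf : OrientPreserving f) {a b δ : ℝ}
    (h : dist (f (circleProj a)) (f (circleProj b)) < δ) :
    f '' circleArc a b ⊆ Metric.ball (f (circleProj a)) δ ∨
      f '' circleArc b (a + 1) ⊆ Metric.ball (f (circleProj a)) δ := by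
  obtain ⟨u, v, fa_eq, fb_eq, image_eq, image_compl_eq⟩ := hf.exists_image_circleArc_eq a b
  rw [fa_eq, fb_eq] at h
  rw [fa_eq, image_eq, image_compl_eq]
  refine (sub_lt_or_sub_lt_of_dist_circleProj_lt h).imp ?_ ?_
  · rintro hlt _ ⟨w, hw, rfl⟩
    refine (dist_circleProj_le w u).trans_lt ?_
    rw [abs_of_nonneg] <;> linarith [hw.1, hw.2]
  · rintro hlt _ ⟨w, hw, rfl⟩
    rw [← circleProj_add_one u]
    refine (dist_circleProj_le w (u + 1)).trans_lt ?_
    rw [abs_of_nonpos] <;> linarith [hw.1, hw.2]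

end OrientPreserving

namespace RDS

variable {Ω : Type} [m : MeasurableSpace Ω] (S : RDS Ω)

instance : IsProbabilityMeasure S.P := S.P_prob

/-! ### Time set and noise -/

lemma nonneg_of_mem_T {t : ℝ} (ht : t ∈ S.T) : 0 ≤ t := by
  rcases S.T_cases with hT | hT <;> rw [hT] at ht
  · obtain ⟨n, rfl⟩ := ht
    exact Nat.cast_nonneg n
  · exact ht

lemma sub_mem_T {s t : ℝ} (hs : s ∈ S.T) (ht : t ∈ S.T) (hst : s ≤ t) : t - s ∈ S.T := by
  rcases S.T_cases with hT | hT <;> rw [hT] at hs ht ⊢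
  · obtain ⟨i, rfl⟩ := hs
    obtain ⟨j, rfl⟩ := ht
    exact ⟨j - i, Nat.cast_sub (Nat.cast_le.1 hst)⟩
  · exact sub_nonneg.2 hst

lemma natCast_mem_T (n : ℕ) : (n : ℝ) ∈ S.T := by
  rcases S.T_cases with hT | hT <;> rw [hT]
  · exact ⟨n, rfl⟩
  · exact mem_Ici.2 (Nat.cast_nonneg n)

lemma exists_countable_antitone_tendsto : ∃ Q ⊆ S.T, Q.Countable ∧ ∀ t ∈ S.T,
    ∃ u : ℕ → ℝ, (∀ n, u n ∈ Q) ∧ Antitone u ∧ Tendsto u atTop (𝓝 t) := by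
  rcases S.T_cases with hT | hT
  · exact ⟨S.T, Subset.rfl, hT ▸ countable_range _, fun t ht =>
      ⟨fun _ => t, fun _ => ht, antitone_const, tendsto_const_nhds⟩⟩
  · refine ⟨S.T ∩ range ((↑) : ℚ → ℝ), inter_subset_left,
      (countable_range _).mono inter_subset_right, fun t ht => ?_⟩
    obtain ⟨u, u_strictAnti, lt_u, u_tendsto⟩ := Real.exists_seq_rat_strictAnti_tendsto t
    refine ⟨fun n => u n, fun n => ⟨?_, mem_range_self _⟩,
      fun i j hij => Rat.cast_le.2 (u_strictAnti.antitone hij), u_tendsto⟩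
    rw [hT]
    exact (S.nonneg_of_mem_T ht).trans (lt_u n).le

lemma tendsto_natCast_tFilter : Tendsto (Nat.cast : ℕ → ℝ) atTop S.tFilter :=
  tendsto_inf.2 ⟨tendsto_natCast_atTop_atTop, tendsto_principal.2 (.of_forall S.natCast_mem_T)⟩

instance : S.tFilter.NeBot := S.tendsto_natCast_tFilter.neBot

lemma eventually_mem_T : ∀ᶠ t in S.tFilter, t ∈ S.T :=
  mem_inf_of_right (mem_principal_self _)

lemma tendsto_sub_tFilter {s : ℝ} (hs : s ∈ S.T) : Tendsto (· - s) S.tFilter S.tFilter := by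
  refine tendsto_inf.2 ⟨tendsto_atTop_add_const_right _ (-s) (tendsto_id.mono_left inf_le_left),
    tendsto_principal.2 ?_⟩
  filter_upwards [S.eventually_mem_T, mem_inf_of_left (eventually_ge_atTop s)] with t ht hst
  exact S.sub_mem_T hs ht hst

lemma Fplus_le : S.Fplus ≤ m := iSup₂_le S.F_le

lemma F_le_Fplus {t : ℝ} (ht : t ∈ S.T) : S.F t ≤ S.Fplus :=
  le_iSup₂ (f := fun s (_ : s ∈ S.T) => S.F s) t ht

/-- The filtration `(𝓕_n)` at integer times. Restricting to it keeps Lévy's zero-one law, which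
Mathlib proves along `ℕ`, available in continuous time as well. -/
def natFiltration : Filtration ℕ m where
  seq n := S.F n
  mono' i j hij := S.F_mono i (S.natCast_mem_T i) j (S.natCast_mem_T j) (Nat.cast_le.2 hij)
  le' n := S.F_le n (S.natCast_mem_T n)

lemma iSup_natFiltration : ⨆ n, S.natFiltration n = S.Fplus := by
  refine le_antisymm (iSup_le fun n => S.F_le_Fplus (S.natCast_mem_T n)) (iSup₂_le fun t ht => ?_)
  obtain ⟨n, hn⟩ := exists_nat_ge t
  exact (S.F_mono t ht n (S.natCast_mem_T n) hn).trans (le_iSup S.natFiltration n)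

lemma comap_θ_le {t : ℝ} (ht : t ∈ S.T) : S.Fplus.comap (S.θ t) ≤ m :=
  (MeasurableSpace.comap_mono S.Fplus_le).trans (S.θ_preserving t ht).measurable.comap_le

lemma indep_comap_θ {t : ℝ} (ht : t ∈ S.T) :
    ProbabilityTheory.Indep (S.Fplus.comap (S.θ t)) (S.F t) S.P := by
  rw [ProbabilityTheory.Indep_iff]
  rintro _ E ⟨A, hA, rfl⟩ hE
  rw [inter_comm, S.θ_indep t ht E A hE hA, mul_comm,
    (S.θ_preserving t ht).measure_preimage (S.Fplus_le A hA).nullMeasurableSet]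

lemma measurable_φ {t : ℝ} (ht : t ∈ S.T) (x : UnitAddCircle) :
    Measurable[S.F t] fun ω => S.φ t ω x :=
  (S.φ_meas t ht).comp (measurable_prodMk_right (mβ := inferInstance))

/-! ### Contracted sets -/

/-- The event that the flow contracts `K`, i.e. that the diameter of `φ(t,ω)K` tends to `0`. For an
arc this amounts to the length of its image tending to `0`; measuring the diameter instead makes
the event measurable for every `K`. -/
def contracting (K : Set UnitAddCircle) : Set Ω :=
  {ω | Tendsto (fun t => Metric.ediam (S.φ t ω '' K)) S.tFilter (𝓝 0)}

variable {S} {K L J : Set UnitAddCircle} {ω : Ω}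

lemma contracting_anti (hKL : K ⊆ L) : S.contracting L ⊆ S.contracting K := fun _ hω =>
  tendsto_of_tendsto_of_tendsto_of_le_of_le tendsto_const_nhds hω (fun _ => zero_le)
    fun _ => Metric.ediam_mono (image_mono hKL)

lemma tendsto_volume_of_mem_contracting (hω : ω ∈ S.contracting K) :
    Tendsto (fun t => volume (S.φ t ω '' K)) S.tFilter (𝓝 0) := by
  have two_mul_tendsto := ENNReal.Tendsto.const_mul (a := 2) hω (.inr ENNReal.ofNat_ne_top)
  rw [mul_zero] at two_mul_tendsto
  exact tendsto_of_tendsto_of_tendsto_of_le_of_le tendsto_const_nhds two_mul_tendsto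
    (fun _ => zero_le) fun _ => volume_le_two_mul_ediam _

lemma mem_contracting_circleArc_iff {a b : ℝ} : ω ∈ S.contracting (circleArc a b) ↔
    Tendsto (fun t => volume (S.φ t ω '' circleArc a b)) S.tFilter (𝓝 0) := by
  refine ⟨tendsto_volume_of_mem_contracting, fun h => ?_⟩
  refine tendsto_of_tendsto_of_tendsto_of_le_of_le' tendsto_const_nhds h
    (.of_forall fun _ => zero_le) ?_
  filter_upwards [S.eventually_mem_T] with t ht
  exact (S.φ_orient t ht ω).ediam_image_circleArc_le_volume a b

lemma mem_contracting_pair_iff {x y : UnitAddCircle} : ω ∈ S.contracting {x, y} ↔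
    Tendsto (fun t => dist (S.φ t ω x) (S.φ t ω y)) S.tFilter (𝓝 0) := by
  simp only [contracting, mem_ofPred_eq, image_pair, Metric.ediam_pair, edist_dist]
  rw [← ENNReal.tendsto_toReal_zero_iff fun _ => ENNReal.ofReal_ne_top]
  simp only [ENNReal.toReal_ofReal dist_nonneg]

lemma tendsto_volume_mono (hKL : K ⊆ L)
    (hL : Tendsto (fun t => volume (S.φ t ω '' L)) S.tFilter (𝓝 0)) :
    Tendsto (fun t => volume (S.φ t ω '' K)) S.tFilter (𝓝 0) :=
  tendsto_of_tendsto_of_tendsto_of_le_of_le tendsto_const_nhds hL (fun _ => zero_le)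
    fun _ => measure_mono (image_mono hKL)

lemma tendsto_volume_union (hK : Tendsto (fun t => volume (S.φ t ω '' K)) S.tFilter (𝓝 0))
    (hL : Tendsto (fun t => volume (S.φ t ω '' L)) S.tFilter (𝓝 0)) :
    Tendsto (fun t => volume (S.φ t ω '' (K ∪ L))) S.tFilter (𝓝 0) := by
  refine tendsto_of_tendsto_of_tendsto_of_le_of_le tendsto_const_nhds
    (by simpa only [add_zero] using hK.add hL) (fun _ => zero_le) fun t => ?_
  rw [image_union]
  exact measure_union_le _ _

lemma not_tendsto_volume_univ :
    ¬ Tendsto (fun t => volume (S.φ t ω '' univ)) S.tFilter (𝓝 0) := by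
  simp only [image_univ, (S.φ _ ω).surjective.range_eq, UnitAddCircle.measure_univ,
    tendsto_const_nhds_iff, one_ne_zero, not_false_eq_true]

lemma mem_contracting_of_θ_mem {s : ℝ} (hs : s ∈ S.T) (hsub : S.φ s ω '' K ⊆ J)
    (hJ : S.θ s ω ∈ S.contracting J) : ω ∈ S.contracting K := by
  refine tendsto_of_tendsto_of_tendsto_of_le_of_le' tendsto_const_nhds
    (hJ.comp (S.tendsto_sub_tFilter hs)) (.of_forall fun _ => zero_le) ?_
  filter_upwards [S.tendsto_sub_tFilter hs S.eventually_mem_T] with t ht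
  refine Metric.ediam_mono ?_
  rintro _ ⟨x, hx, rfl⟩
  refine ⟨S.φ s ω x, hsub (mem_image_of_mem _ hx), ?_⟩
  rw [← S.φ_cocycle s hs _ ht, add_sub_cancel]

lemma ediam_image_le_of_seq {t : ℝ} (ht : t ∈ S.T) {u : ℕ → ℝ} (hu : ∀ n, u n ∈ S.T)
    (u_anti : Antitone u) (u_tendsto : Tendsto u atTop (𝓝 t)) {C : ℝ≥0∞}
    (hC : ∀ n, Metric.ediam (S.φ (u n) ω '' K) ≤ C) : Metric.ediam (S.φ t ω '' K) ≤ C :=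
  ediam_image_le_of_tendsto (l := atTop)
    (fun x _ => S.φ_cadlag_right ω t ht u hu u_anti u_tendsto _ x tendsto_const_nhds) hC

lemma mem_contracting_iff_tendsto_inf_principal {Q : Set ℝ} (hQT : Q ⊆ S.T)
    (hQ : ∀ t ∈ S.T, ∃ u : ℕ → ℝ, (∀ n, u n ∈ Q) ∧ Antitone u ∧ Tendsto u atTop (𝓝 t)) :
    ω ∈ S.contracting K ↔
      Tendsto (fun t => Metric.ediam (S.φ t ω '' K)) (atTop ⊓ 𝓟 Q) (𝓝 0) := by
  refine ⟨fun h => h.mono_left (inf_le_inf_left _ (principal_mono.2 hQT)), fun h => ?_⟩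
  simp only [contracting, mem_ofPred_eq, tFilter, ENNReal.tendsto_nhds_zero,
    eventually_inf_principal, eventually_atTop] at h ⊢
  refine fun ε hε => (h ε hε).imp fun T₀ hT₀ t hT₀t ht => ?_
  obtain ⟨u, hu, u_anti, u_tendsto⟩ := hQ t ht
  exact ediam_image_le_of_seq ht (fun n => hQT (hu n)) u_anti u_tendsto fun n =>
    hT₀ _ (hT₀t.trans (u_anti.le_of_tendsto u_tendsto n)) (hu n)

variable (S) in
lemma measurableSet_contracting (K : Set UnitAddCircle) :
    MeasurableSet[S.Fplus] (S.contracting K) := by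
  obtain ⟨Q, hQT, Q_countable, hQ⟩ := S.exists_countable_antitone_tendsto
  have contracting_eq : S.contracting K =
      {ω | Tendsto (fun q : Q => Metric.ediam (S.φ q ω '' K))
        (comap ((↑) : Q → ℝ) atTop) (𝓝 0)} := by
    ext ω
    rw [mem_contracting_iff_tendsto_inf_principal hQT hQ, ← subtype_coe_map_comap, tendsto_map'_iff]
    rfl
  have := Q_countable.to_subtype
  rw [contracting_eq]
  refine measurableSet_tendsto _ fun q : Q => ?_
  exact (measurable_ediam_image (fun ω => (S.φ q ω).continuous) (S.measurable_φ (hQT q.2)) K).mono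
    (S.F_le_Fplus (hQT q.2)) le_rfl

lemma ae_mem_contracting_of_frequently_image_subset (K : Set UnitAddCircle) (hJ : IsClosed J)
    (hJ_pos : 0 < S.P (S.contracting J)) :
    ∀ᵐ ω ∂S.P, (∃ᶠ n : ℕ in atTop, S.φ n ω '' K ⊆ J) → ω ∈ S.contracting K := by
  have le_condExp : ∀ᵐ ω ∂S.P, ∀ n : ℕ, S.φ n ω '' K ⊆ J → S.P.real (S.contracting J) ≤
      S.P[(S.contracting K).indicator (fun _ => (1 : ℝ)) | S.natFiltration n] ω := by
    refine ae_all_iff.2 fun n => ?_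
    have hn := S.natCast_mem_T n
    rw [← (S.θ_preserving n hn).measureReal_preimage
      (S.Fplus_le _ (S.measurableSet_contracting J)).nullMeasurableSet]
    exact ae_measureReal_le_condExp_of_indep (S.comap_θ_le hn) (S.F_le n hn) (S.indep_comap_θ hn)
      (S.Fplus_le _ (S.measurableSet_contracting K)) ⟨_, S.measurableSet_contracting J, rfl⟩
      (measurableSet_image_subset (fun ω => (S.φ n ω).continuous) (S.measurable_φ hn) K hJ)
      fun ω hω => mem_contracting_of_θ_mem hn hω.1 hω.2
  have levy := ae_mem_of_frequently_le_condExp (μ := S.P) S.natFiltration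
    (S.iSup_natFiltration ▸ S.measurableSet_contracting K)
    (ENNReal.toReal_pos hJ_pos.ne' (measure_ne_top _ _))
  filter_upwards [levy, le_condExp] with ω levy le_condExp frequently_subset
  exact levy (frequently_subset.mono le_condExp)

/-! ### Local stability and synchronisation -/

lemma exists_isOpen_tendsto_volume_iff {x : UnitAddCircle} :
    (∃ U, IsOpen U ∧ x ∈ U ∧ Tendsto (fun t => volume (S.φ t ω '' U)) S.tFilter (𝓝 0)) ↔
      ∃ n : ℕ, ω ∈ S.contracting (Metric.closedBall x (1 / (n + 1))) := by
  constructor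
  · rintro ⟨U, U_open, hxU, hU⟩
    obtain ⟨n, -, closedBall_subset⟩ :=
      Metric.nhds_basis_closedBall_inv_nat_succ.mem_iff.1 (U_open.mem_nhds hxU)
    refine ⟨n, ?_⟩
    obtain ⟨c, rfl⟩ := circleProj_surjective x
    rw [closedBall_circleProj] at closedBall_subset ⊢
    exact mem_contracting_circleArc_iff.2 (tendsto_volume_mono closedBall_subset hU)
  · rintro ⟨n, hn⟩
    exact ⟨Metric.ball x (1 / (n + 1)), Metric.isOpen_ball,
      Metric.mem_ball_self Nat.one_div_pos_of_nat,
      tendsto_volume_mono Metric.ball_subset_closedBall (tendsto_volume_of_mem_contracting hn)⟩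

lemma EverywhereLocallyStable.measure_iUnion_contracting (hS : S.EverywhereLocallyStable)
    (x : UnitAddCircle) :
    S.P (⋃ n : ℕ, S.contracting (Metric.closedBall x (1 / (n + 1)))) = 1 := by
  rw [← hS x]
  congr 1
  ext ω
  rw [mem_iUnion, mem_ofPred_eq, exists_isOpen_tendsto_volume_iff]

lemma EverywhereLocallyStable.ae_exists_isOpen (hS : S.EverywhereLocallyStable)
    (x : UnitAddCircle) : ∀ᵐ ω ∂S.P,
      ∃ U, IsOpen U ∧ x ∈ U ∧ Tendsto (fun t => volume (S.φ t ω '' U)) S.tFilter (𝓝 0) := by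
  have iUnion_mem_ae := (mem_ae_iff_prob_eq_one (.iUnion fun n =>
    S.Fplus_le _ (S.measurableSet_contracting _))).2 (hS.measure_iUnion_contracting x)
  filter_upwards [iUnion_mem_ae] with ω hω
  exact exists_isOpen_tendsto_volume_iff.2 (mem_iUnion.1 hω)

lemma EverywhereLocallyStable.exists_contracting_closedBall_pos (hS : S.EverywhereLocallyStable)
    (x : UnitAddCircle) : ∃ ρ > 0, 0 < S.P (S.contracting (Metric.closedBall x ρ)) := by
  obtain ⟨n, hn⟩ := exists_measure_pos_of_not_measure_iUnion_null
    ((hS.measure_iUnion_contracting x).trans_ne one_ne_zero)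
  exact ⟨1 / (n + 1), Nat.one_div_pos_of_nat, hn⟩

lemma EverywhereLocallyStable.exists_ae_mem_contracting_of_frequently_image_subset_ball
    (hS : S.EverywhereLocallyStable) : ∃ δ > 0, ∀ K : Set UnitAddCircle, ∀ᵐ ω ∂S.P,
      (∃ᶠ n : ℕ in atTop, ∃ z, S.φ n ω '' K ⊆ Metric.ball z δ) → ω ∈ S.contracting K := by
  choose ρ ρ_pos contracting_pos using hS.exists_contracting_closedBall_pos
  obtain ⟨s, δ, δ_pos, ball_subset⟩ := exists_finset_forall_exists_ball_subset
    fun x => Metric.closedBall_mem_nhds x (ρ_pos x)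
  refine ⟨δ, δ_pos, fun K => ?_⟩
  have levy : ∀ᵐ ω ∂S.P, ∀ x ∈ s, (∃ᶠ n : ℕ in atTop,
      S.φ n ω '' K ⊆ Metric.closedBall x (ρ x)) → ω ∈ S.contracting K :=
    (ae_ball_iff s.countable_toSet).2 fun x _ =>
      ae_mem_contracting_of_frequently_image_subset K Metric.isClosed_closedBall
        (contracting_pos x)
  filter_upwards [levy] with ω levy frequently_subset
  have frequently_exists : ∃ᶠ n : ℕ in atTop, ∃ x ∈ s,
      S.φ n ω '' K ⊆ Metric.closedBall x (ρ x) :=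
    frequently_subset.mono fun n ⟨z, hz⟩ => (ball_subset z).imp fun x hx => ⟨hx.1, hz.trans hx.2⟩
  obtain ⟨x, hx, frequently_subset_x⟩ := s.frequently_exists.1 frequently_exists
  exact levy x hx frequently_subset_x

lemma Synchronising.ae_mem_contracting_pair (hS : S.Synchronising) (x y : UnitAddCircle) :
    ∀ᵐ ω ∂S.P, ω ∈ S.contracting {x, y} := by
  refine (mem_ae_iff_prob_eq_one (S.Fplus_le _ (S.measurableSet_contracting _))).2 ?_
  rw [← hS x y]
  congr 1
  ext ω
  exact mem_contracting_pair_iff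

lemma StablySynchronising.ae_mem_contracting_circleArc_or (hS : S.StablySynchronising)
    (a b : ℝ) : ∀ᵐ ω ∂S.P,
      ω ∈ S.contracting (circleArc a b) ∨ ω ∈ S.contracting (circleArc b (a + 1)) := by
  obtain ⟨δ, δ_pos, levy⟩ := hS.2.exists_ae_mem_contracting_of_frequently_image_subset_ball
  filter_upwards [levy (circleArc a b), levy (circleArc b (a + 1)),
    hS.1.ae_mem_contracting_pair (circleProj a) (circleProj b)] with ω levy_arc levy_compl sync
  have eventually_dist_lt : ∀ᶠ n : ℕ in atTop,
      dist (S.φ n ω (circleProj a)) (S.φ n ω (circleProj b)) < δ :=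
    ((mem_contracting_pair_iff.1 sync).comp S.tendsto_natCast_tFilter).eventually_lt_const δ_pos
  have eventually_subset : ∀ᶠ n : ℕ in atTop,
      (∃ z, S.φ n ω '' circleArc a b ⊆ Metric.ball z δ) ∨
        ∃ z, S.φ n ω '' circleArc b (a + 1) ⊆ Metric.ball z δ :=
    eventually_dist_lt.mono fun n hn =>
      ((S.φ_orient n (S.natCast_mem_T n) ω).image_circleArc_subset_ball_or hn).imp
        (Exists.intro _) (Exists.intro _)
  exact (frequently_or_distrib.1 eventually_subset.frequently).imp levy_arc levy_compl

/-! ### Crack points -/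

variable (S) in
lemma exists_forall_nhds_notMem_contracting (ω : Ω) :
    ∃ r, ∀ U ∈ 𝓝 r, ω ∉ S.contracting U := by
  by_contra! h
  refine not_tendsto_volume_univ (S := S) (ω := ω) (isCompact_univ.induction_on
    (p := fun K => Tendsto (fun t => volume (S.φ t ω '' K)) S.tFilter (𝓝 0)) ?_
    (fun _ _ => tendsto_volume_mono) (fun _ _ => tendsto_volume_union) fun x _ => ?_)
  · simp only [image_empty, measure_empty, tendsto_const_nhds]
  · obtain ⟨U, hU, hω⟩ := h x
    exact ⟨U, mem_nhdsWithin_of_mem_nhds hU, tendsto_volume_of_mem_contracting hω⟩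

lemma mem_Ωc_of_forall_rat (h : ∀ a b : ℚ,
    ω ∈ S.contracting (circleArc a b) ∨ ω ∈ S.contracting (circleArc b (a + 1))) : ω ∈ S.Ωc := by
  obtain ⟨r, hr⟩ := S.exists_forall_nhds_notMem_contracting ω
  obtain ⟨c, rfl⟩ := circleProj_surjective r
  refine ⟨circleProj c, fun G hG hcG => ?_⟩
  obtain ⟨l, u, hc, Ioo_subset⟩ := mem_nhds_iff_exists_Ioo_subset.1
    ((hG.isOpen_compl.preimage continuous_circleProj).mem_nhds hcG)
  obtain ⟨a, hla, hac⟩ := exists_rat_btwn hc.1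
  obtain ⟨b, hcb, hbu⟩ := exists_rat_btwn hc.2
  have compl_contracting : ω ∈ S.contracting (circleArc b (a + 1)) :=
    (h a b).resolve_left (hr _ (circleArc_mem_nhds hac hcb))
  have G_subset : G ⊆ circleArc b (a + 1) := by
    refine fun z hz => ((circleArc_union_circleArc a b).ge (mem_univ z)).resolve_left ?_
    rintro ⟨w, hw, rfl⟩
    exact Ioo_subset ⟨hla.trans_le hw.1, hw.2.trans_lt hbu⟩ hz
  exact tendsto_volume_mono G_subset (tendsto_volume_of_mem_contracting compl_contracting)

lemma StablySynchronising.measure_Ωc (hS : S.StablySynchronising) : S.P S.Ωc = 1 := by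
  have dichotomy : ∀ᵐ ω ∂S.P, ∀ a b : ℚ,
      ω ∈ S.contracting (circleArc a b) ∨ ω ∈ S.contracting (circleArc b (a + 1)) :=
    ae_all_iff.2 fun a => ae_all_iff.2 fun b => hS.ae_mem_contracting_circleArc_or a b
  have ae_mem_Ωc : S.Ωc =ᵐ[S.P] univ :=
    eventuallyEq_univ.2 (dichotomy.mono fun _ => mem_Ωc_of_forall_rat)
  rw [measure_congr ae_mem_Ωc, measure_univ]

lemma CrackPoint.not_tendsto_volume_of_isOpen {r : UnitAddCircle} (hr : S.CrackPoint ω r)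
    {U : Set UnitAddCircle} (U_open : IsOpen U) (hrU : r ∈ U) :
    ¬ Tendsto (fun t => volume (S.φ t ω '' U)) S.tFilter (𝓝 0) := fun hU =>
  not_tendsto_volume_univ (union_compl_self U ▸
    tendsto_volume_union hU (hr Uᶜ U_open.isClosed_compl fun hrU' => hrU' hrU))

lemma EverywhereLocallyStable.measure_crackPoint_eq_zero (hS : S.EverywhereLocallyStable)
    (x : UnitAddCircle) : S.P {ω | S.CrackPoint ω x} = 0 := by
  refine measure_mono_null ?_ (ae_iff.1 (hS.ae_exists_isOpen x))
  rintro ω hx ⟨U, U_open, hxU, hU⟩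
  exact hx.not_tendsto_volume_of_isOpen U_open hxU hU

lemma CrackPoint.exists_isOpen_tendsto_volume {r x : UnitAddCircle} (hr : S.CrackPoint ω r)
    (hxr : x ≠ r) :
    ∃ U, IsOpen U ∧ x ∈ U ∧ Tendsto (fun t => volume (S.φ t ω '' U)) S.tFilter (𝓝 0) := by
  obtain ⟨G, hG, G_closed, hrG⟩ := (isClosed_singleton (x := r)).isOpen_compl.mem_nhds hxr
    |> exists_mem_nhds_isClosed_subset
  exact ⟨interior G, isOpen_interior, mem_interior_iff_mem_nhds.2 hG,
    tendsto_volume_mono interior_subset (hr G G_closed fun hr => hrG hr rfl)⟩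

lemma CrackPoint.tendsto_dist {r x y : UnitAddCircle} (hr : S.CrackPoint ω r) (hxr : x ≠ r)
    (hyr : y ≠ r) : Tendsto (fun t => dist (S.φ t ω x) (S.φ t ω y)) S.tFilter (𝓝 0) := by
  obtain ⟨a, b, hx, hy, r_notMem⟩ := exists_circleArc_mem_mem_notMem hxr hyr
  have arc_contracting := mem_contracting_circleArc_iff.2 (hr _ (isClosed_circleArc a b) r_notMem)
  exact mem_contracting_pair_iff.1 (contracting_anti (pair_subset hx hy) arc_contracting)

end RDS

/-- `φ` is stably synchronising iff `ℙ(Ω_c) = 1` and the law of the crack point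
is atomless. -/
theorem stablySynchronising_iff_crackPoints_ae_and_atomless
    {Ω : Type} [MeasurableSpace Ω] (S : RDS Ω)
    (r : Ω → UnitAddCircle) (hr : ∀ ω ∈ S.Ωc, S.CrackPoint ω (r ω)) :
    S.StablySynchronising ↔
      (S.P S.Ωc = 1 ∧ ∀ x : UnitAddCircle, S.P {ω | ω ∈ S.Ωc ∧ r ω = x} = 0) := by
  constructor
  · refine fun hS => ⟨hS.measure_Ωc, fun x => ?_⟩
    refine measure_mono_null ?_ (hS.2.measure_crackPoint_eq_zero x)
    rintro ω ⟨hω, rfl⟩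
    exact hr ω hω
  · rintro ⟨ae_contractive, atomless⟩
    refine ⟨fun x y => ?_, fun x => ?_⟩
    · refine prob_eq_one_of_diff_null_subset ae_contractive
        (measure_union_null (atomless x) (atomless y)) fun ω ⟨hω, hxy⟩ => ?_
      exact (hr ω hω).tendsto_dist (fun hx => hxy (.inl ⟨hω, hx.symm⟩))
        fun hy => hxy (.inr ⟨hω, hy.symm⟩)
    · refine prob_eq_one_of_diff_null_subset ae_contractive (atomless x) fun ω ⟨hω, hx⟩ => ?_
      exact (hr ω hω).exists_isOpen_tendsto_volume fun hxr => hx ⟨hω, hxr.symm⟩
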